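/- arXiv:1702.03981 — 6 statements merged into one kernel-verified Lean document; each statement's English description precedes it below -/
import Mathlib

section
/- Runs of the Antecedent Automaton: If ν⃗_{1..n} is a path in a cyclic proof P and ρ : q_𝒜 →^{ν⃗} q_n is a run of the weighted automaton 𝒜^{(P,ν)}_{(τ,τ')}, then there exists a left-hand trace τ⃗_{1..k} with k ≤ n and τ⃗_1 = τ such that q_i = (ν⃗_i, τ⃗_i) for each i ∈ {1,…,k} and q_j = ⊤ for each j ∈ {k+1,…,n}. Moreover, if q_n = (ν⃗_n, τ'') for some trace value τ'', then k = n and τ'' = τ⃗_n. -/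
noncomputable section

/-- We work with ordinals in universe 0. -/
abbrev Ordl : Type 1 := Ordinal.{0}

/-- Reverse ordinal sum: `revSum d k = d (k-1) + ⋯ + d 0` (and `0` for `k = 0`). -/
def revSum (d : ℕ → Ordl) : ℕ → Ordl
  | 0 => 0
  | k + 1 => d k + revSum d k

/-- An abstract entailment system: antecedents, consequents, models, the two
satisfaction relations, and finite sets of trace values for antecedents and
consequents (drawn from the disjoint types `TA` and `TC`). -/
structure CES where
  A : Type
  C : Type
  M : Type
  TA : Type
  TC : Type
  satA : M → A → Prop
  satC : M → C → Prop
  tvA : A → Finset TA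
  tvC : C → Finset TC

/-- Validity of a sequent `A ⊢ C`: every model of the antecedent satisfies the consequent. -/
def CES.Valid (S : CES) (s : S.A × S.C) : Prop :=
  ∀ m : S.M, S.satA m s.1 → S.satC m s.2

/-- A cyclic pre-proof: a finite directed graph whose nodes carry sequents and
(ordered) lists of children, together with the trace pair functions `δ1` (on
antecedent trace values) and `δ2` (on consequent trace values) attached to the
rule instance at each node/premise.  `δ1`/`δ2` are partial (Option-valued) and
only defined along edges, on trace values of the respective sequents. -/
structure PreProof (S : CES) where
  Node : Type
  [fintypeNode : Fintype Node]
  [decEqNode : DecidableEq Node]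
  seqOf : Node → S.A × S.C
  children : Node → List Node
  δ1 : Node → Node → S.TA → S.TA → Option Ordl
  δ2 : Node → Node → S.TC → S.TC → Option Ordl
  δ1_dom : ∀ ν ν' τ τ', (δ1 ν ν' τ τ').isSome →
    ν' ∈ children ν ∧ τ ∈ S.tvA (seqOf ν).1 ∧ τ' ∈ S.tvA (seqOf ν').1
  δ2_dom : ∀ ν ν' τ τ', (δ2 ν ν' τ τ').isSome →
    ν' ∈ children ν ∧ τ ∈ S.tvC (seqOf ν).2 ∧ τ' ∈ S.tvC (seqOf ν').2

attribute [instance] PreProof.fintypeNode PreProof.decEqNode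

/-- An ordinal trace function: partial ordinal-valued functions on
(antecedent resp. consequent) trace value/model pairs, defined at least on all
`(τ, m)` with `τ ∈ tvA A` and `m ⊨ A`. -/
structure OTF (S : CES) where
  OA : S.TA → S.M → Option Ordl
  OC : S.TC → S.M → Option Ordl
  definedA : ∀ (a : S.A) (τ : S.TA) (m : S.M),
    τ ∈ S.tvA a → S.satA m a → (OA τ m).isSome

/-- `1̲`: the least value taken by the ordinal trace function. -/
def OTF.leastVal {S : CES} (O : OTF S) : Ordl :=
  sInf {o : Ordl | (∃ τ m, O.OA τ m = some o) ∨ (∃ τ m, O.OC τ m = some o)}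

/-- A sequent `s` equates trace values `τa` and `τc`: whenever `s` is valid,
every model of the antecedent realizing `τc` realizes `τa` with the same size. -/
def OTF.Equates {S : CES} (O : OTF S) (s : S.A × S.C) (τa : S.TA) (τc : S.TC) : Prop :=
  S.Valid s → ∀ m : S.M, S.satA m s.1 →
    ∀ o : Ordl, O.OC τc m = some o → O.OA τa m = some o

namespace PreProof

variable {S : CES}

/-- A node is axiomatic when its rule instance has no premises. -/
def Axiomatic (P : PreProof S) (ν : P.Node) : Prop := P.children ν = []

/-- `νs 0, …, νs (n-1)` is a (finite) path in the pre-proof. -/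
def IsPath (P : PreProof S) (n : ℕ) (νs : ℕ → P.Node) : Prop :=
  ∀ i, i + 1 < n → νs (i + 1) ∈ P.children (νs i)

/-- An infinite path in the pre-proof. -/
def InfPath (P : PreProof S) (νs : ℕ → P.Node) : Prop :=
  ∀ i, νs (i + 1) ∈ P.children (νs i)

/-- A left-hand trace `τs 0, …, τs (k-1)` follows (an initial segment of) the
path `νs 0, …, νs (n-1)`. -/
def FollowsL (P : PreProof S) (n : ℕ) (νs : ℕ → P.Node) (k : ℕ) (τs : ℕ → S.TA) : Prop :=
  k ≤ n ∧ (∀ i < k, τs i ∈ S.tvA (P.seqOf (νs i)).1) ∧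
    ∀ i, i + 1 < k → (P.δ1 (νs i) (νs (i + 1)) (τs i) (τs (i + 1))).isSome

/-- A right-hand trace `τs 0, …, τs (k-1)` follows (an initial segment of) the
path `νs 0, …, νs (n-1)`. -/
def FollowsR (P : PreProof S) (n : ℕ) (νs : ℕ → P.Node) (k : ℕ) (τs : ℕ → S.TC) : Prop :=
  k ≤ n ∧ (∀ i < k, τs i ∈ S.tvC (P.seqOf (νs i)).2) ∧
    ∀ i, i + 1 < k → (P.δ2 (νs i) (νs (i + 1)) (τs i) (τs (i + 1))).isSome

/-- The `δ1`-value of the `i`-th step of a left-hand trace along a path. -/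
def stepL (P : PreProof S) (νs : ℕ → P.Node) (τs : ℕ → S.TA) (i : ℕ) : Ordl :=
  (P.δ1 (νs i) (νs (i + 1)) (τs i) (τs (i + 1))).getD 0

/-- The `δ2`-value of the `i`-th step of a right-hand trace along a path. -/
def stepR (P : PreProof S) (νs : ℕ → P.Node) (τs : ℕ → S.TC) (i : ℕ) : Ordl :=
  (P.δ2 (νs i) (νs (i + 1)) (τs i) (τs (i + 1))).getD 0

/-- Size `Θ` of a left-hand trace of length `k` along a path: the *reverse*
ordinal sum `δ1(τ_{k-2},τ_{k-1}) + ⋯ + δ1(τ_0,τ_1)`. -/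
def thetaL (P : PreProof S) (νs : ℕ → P.Node) (τs : ℕ → S.TA) (k : ℕ) : Ordl :=
  revSum (P.stepL νs τs) (k - 1)

/-- Size `Θ` of a right-hand trace of length `k` along a path (reverse sum). -/
def thetaR (P : PreProof S) (νs : ℕ → P.Node) (τs : ℕ → S.TC) (k : ℕ) : Ordl :=
  revSum (P.stepR νs τs) (k - 1)

/-- The global soundness condition: every infinite path has a tail followed by
an infinitely progressing left-hand trace. -/
def GlobalSound (P : PreProof S) : Prop :=
  ∀ νs : ℕ → P.Node, P.InfPath νs →
    ∃ (k : ℕ) (τs : ℕ → S.TA),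
      (∀ i, (P.δ1 (νs (k + i)) (νs (k + i + 1)) (τs i) (τs (i + 1))).isSome) ∧
      ∀ N, ∃ i, N ≤ i ∧
        ∃ α : Ordl, P.δ1 (νs (k + i)) (νs (k + i + 1)) (τs i) (τs (i + 1)) = some α ∧ 0 < α

/-- A (valid) cyclic proof: a pre-proof satisfying the global soundness
condition; consequently (and we record it as part of the notion) all sequents
occurring in it are valid. -/
def IsCyclicProof (P : PreProof S) : Prop :=
  P.GlobalSound ∧ ∀ ν : P.Node, S.Valid (P.seqOf ν)

/-- The descending counter-model property of an ordinal trace function. -/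
def DCM (P : PreProof S) (O : OTF S) : Prop :=
  ∀ (ν : P.Node) (m : S.M),
    S.satA m (P.seqOf ν).1 → ¬ S.satC m (P.seqOf ν).2 →
    ∃ ν' ∈ P.children ν, ∃ m' : S.M,
      S.satA m' (P.seqOf ν').1 ∧ ¬ S.satC m' (P.seqOf ν').2 ∧
      ∀ (τ τ' : S.TA) (α : Ordl), P.δ1 ν ν' τ τ' = some α →
        ∀ o : Ordl, O.OA τ m = some o →
          ∃ o' : Ordl, O.OA τ' m' = some o' ∧ o' + α ≤ o

/-- A right-hand trace value is terminal for a node when it has no successor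
trace value towards any premise. -/
def TerminalR (P : PreProof S) (ν : P.Node) (σ : S.TC) : Prop :=
  ∀ ν' ∈ P.children ν, ∀ σ', P.δ2 ν ν' σ σ' = none

/-- Defining property of the exclusion predicate: a rule instance (node)
excludes a consequent trace value only if no model of the antecedent realizes
it. -/
def ExclOK (P : PreProof S) (O : OTF S) (Excl : P.Node → S.TC → Prop) : Prop :=
  ∀ (ν : P.Node) (σ : S.TC), Excl ν σ →
    ∀ m : S.M, S.satA m (P.seqOf ν).1 → O.OC σ m = none

/-- A consequent trace value is ground w.r.t. a node: if the node's sequent is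
valid then the value is realized only with the least possible size. -/
def Ground (P : PreProof S) (O : OTF S) (ν : P.Node) (σ : S.TC) : Prop :=
  S.Valid (P.seqOf ν) → ∀ m : S.M, S.satA m (P.seqOf ν).1 →
    ∀ o : Ordl, O.OC σ m = some o → o = O.leastVal

/-- The trace value ordering relation `τ2 ∼^ν_P τ1` (`∼` is `<` when
`strict = true` and `≤` otherwise). -/
def TVO (P : PreProof S) (O : OTF S) (Excl : P.Node → S.TC → Prop) (strict : Bool)
    (ν0 : P.Node) (τ1 : S.TA) (τ2 : S.TC) : Prop :=
  ∀ (n : ℕ) (νs : ℕ → P.Node) (τs : ℕ → S.TC),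
    1 ≤ n → P.IsPath n νs → νs 0 = ν0 → τs 0 = τ2 →
    P.FollowsR n νs n τs →
    P.TerminalR (νs (n - 1)) (τs (n - 1)) →
    ¬ Excl (νs (n - 1)) (τs (n - 1)) →
    ∃ (k : ℕ) (τs' : ℕ → S.TA),
      1 ≤ k ∧ k ≤ n ∧ τs' 0 = τ1 ∧ P.FollowsL n νs k τs' ∧
      (if strict then P.thetaR νs τs n < P.thetaL νs τs' k
        else P.thetaR νs τs n ≤ P.thetaL νs τs' k) ∧
      (P.Ground O (νs (n - 1)) (τs (n - 1)) ∨
        (P.Axiomatic (νs (n - 1)) ∧ k = n ∧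
          O.Equates (P.seqOf (νs (n - 1))) (τs' (n - 1)) (τs (n - 1))))

/-- The descending model property of an ordinal trace function. -/
def DMP (P : PreProof S) (O : OTF S) : Prop :=
  ∀ ν : P.Node, P.children ν ≠ [] →
    S.Valid (P.seqOf ν) → (∀ ν' ∈ P.children ν, S.Valid (P.seqOf ν')) →
    ∀ τ1 ∈ S.tvA (P.seqOf ν).1, ∀ τ2 ∈ S.tvC (P.seqOf ν).2,
    ∀ m : S.M, S.satA m (P.seqOf ν).1 →
    ∃ ν' ∈ P.children ν, ∃ m' : S.M,
      S.satA m' (P.seqOf ν').1 ∧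
      (P.TerminalR ν τ2 ∨ ∃ σ', (P.δ2 ν ν' τ2 σ').isSome) ∧
      (∀ (σ' : S.TA) (α : Ordl), P.δ1 ν ν' τ1 σ' = some α →
        ∀ o : Ordl, O.OA τ1 m = some o →
          ∃ o' : Ordl, O.OA σ' m' = some o' ∧ o' + α ≤ o) ∧
      (∀ (σ' : S.TC) (α : Ordl), P.δ2 ν ν' τ2 σ' = some α →
        ∀ o : Ordl, O.OC τ2 m = some o →
          ∃ o' : Ordl, O.OC σ' m' = some o' ∧ o ≤ o' + α)

/-- A sequence of models supports a left-hand trace along a path. -/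
def SupportsL (P : PreProof S) (O : OTF S) (n : ℕ) (νs : ℕ → P.Node) (k : ℕ)
    (τs : ℕ → S.TA) (ms : ℕ → S.M) : Prop :=
  P.FollowsL n νs k τs ∧
    (∀ i < k, S.satA (ms i) (P.seqOf (νs i)).1 ∧ (O.OA (τs i) (ms i)).isSome) ∧
    ∀ j, j + 1 < k → ∀ o o' : Ordl, O.OA (τs j) (ms j) = some o →
      O.OA (τs (j + 1)) (ms (j + 1)) = some o' →
      o' + P.stepL νs τs j ≤ o

/-- A sequence of models supports a right-hand trace along a path. -/
def SupportsR (P : PreProof S) (O : OTF S) (n : ℕ) (νs : ℕ → P.Node) (k : ℕ)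
    (τs : ℕ → S.TC) (ms : ℕ → S.M) : Prop :=
  P.FollowsR n νs k τs ∧
    (∀ i < k, S.satC (ms i) (P.seqOf (νs i)).2 ∧ (O.OC (τs i) (ms i)).isSome) ∧
    ∀ j, j + 1 < k → ∀ o o' : Ordl, O.OC (τs j) (ms j) = some o →
      O.OC (τs (j + 1)) (ms (j + 1)) = some o' →
      o ≤ o' + P.stepR νs τs j

/-- `(ν', τ')` is reachable from `(ν, τ)` on the left. -/
def ReachL (P : PreProof S) (ν : P.Node) (τ : S.TA) (ν' : P.Node) (τ' : S.TA) : Prop :=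
  ∃ (n : ℕ) (νs : ℕ → P.Node) (τs : ℕ → S.TA),
    1 ≤ n ∧ P.IsPath n νs ∧ P.FollowsL n νs n τs ∧
    νs 0 = ν ∧ τs 0 = τ ∧ νs (n - 1) = ν' ∧ τs (n - 1) = τ'

/-- `(ν', τ')` is reachable from `(ν, τ)` on the right. -/
def ReachR (P : PreProof S) (ν : P.Node) (τ : S.TC) (ν' : P.Node) (τ' : S.TC) : Prop :=
  ∃ (n : ℕ) (νs : ℕ → P.Node) (τs : ℕ → S.TC),
    1 ≤ n ∧ P.IsPath n νs ∧ P.FollowsR n νs n τs ∧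
    νs 0 = ν ∧ τs 0 = τ ∧ νs (n - 1) = ν' ∧ τs (n - 1) = τ'

/-- A left cycle along a path. -/
def IsCycleL (P : PreProof S) (n : ℕ) (νs : ℕ → P.Node) (τs : ℕ → S.TA) : Prop :=
  2 ≤ n ∧ P.IsPath n νs ∧ P.FollowsL n νs n τs ∧ νs (n - 1) = νs 0 ∧ τs (n - 1) = τs 0

/-- A right cycle along a path. -/
def IsCycleR (P : PreProof S) (n : ℕ) (νs : ℕ → P.Node) (τs : ℕ → S.TC) : Prop :=
  2 ≤ n ∧ P.IsPath n νs ∧ P.FollowsR n νs n τs ∧ νs (n - 1) = νs 0 ∧ τs (n - 1) = τs 0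

/-- A simple left cycle. -/
def IsSimpleCycleL (P : PreProof S) (n : ℕ) (νs : ℕ → P.Node) (τs : ℕ → S.TA) : Prop :=
  P.IsCycleL n νs τs ∧
    ∀ i j, 1 ≤ i → i < j → j ≤ n - 1 → ¬ (νs i = νs j ∧ τs i = τs j)

/-- A simple right cycle. -/
def IsSimpleCycleR (P : PreProof S) (n : ℕ) (νs : ℕ → P.Node) (τs : ℕ → S.TC) : Prop :=
  P.IsCycleR n νs τs ∧
    ∀ i j, 1 ≤ i → i < j → j ≤ n - 1 → ¬ (νs i = νs j ∧ τs i = τs j)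

/-- A simple left binary cycle. -/
def IsSimpleBinCycleL (P : PreProof S) (n : ℕ) (νs : ℕ → P.Node)
    (τs τs' : ℕ → S.TA) : Prop :=
  P.IsCycleL n νs τs ∧ P.IsCycleL n νs τs' ∧
    ∀ i j, 1 ≤ i → i < j → j ≤ n - 1 →
      ¬ (νs i = νs j ∧ τs i = τs j ∧ τs' i = τs' j)

/-- `P` is left finitely progressing w.r.t. `(ν0, τ0)`. -/
def FinProgL (P : PreProof S) (ν0 : P.Node) (τ0 : S.TA) : Prop :=
  ∀ (ν1 ν2 : P.Node) (τ1 τ2 : S.TA) (α : Ordl),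
    P.ReachL ν0 τ0 ν1 τ1 → P.δ1 ν1 ν2 τ1 τ2 = some α → α < Ordinal.omega0

/-- `P` is right finitely progressing w.r.t. `(ν0, τ0)`. -/
def FinProgR (P : PreProof S) (ν0 : P.Node) (τ0 : S.TC) : Prop :=
  ∀ (ν1 ν2 : P.Node) (τ1 τ2 : S.TC) (α : Ordl),
    P.ReachR ν0 τ0 ν1 τ1 → P.δ2 ν1 ν2 τ1 τ2 = some α → α < Ordinal.omega0

/-- `P` is dynamic w.r.t. `ν0`, `τA`, `τC`: every reachable left or right
simple cycle has strictly positive size. -/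
def Dynamic (P : PreProof S) (ν0 : P.Node) (τA : S.TA) (τC : S.TC) : Prop :=
  (∀ (n : ℕ) (νs : ℕ → P.Node) (τs : ℕ → S.TA), P.IsSimpleCycleL n νs τs →
    P.ReachL ν0 τA (νs 0) (τs 0) → 0 < P.thetaL νs τs n) ∧
  (∀ (n : ℕ) (νs : ℕ → P.Node) (τs : ℕ → S.TC), P.IsSimpleCycleR n νs τs →
    P.ReachR ν0 τC (νs 0) (τs 0) → 0 < P.thetaR νs τs n)

/-- `P` is balanced w.r.t. `(ν0, τA)`: the two components of every reachable
simple left binary cycle have equal size. -/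
def Balanced (P : PreProof S) (ν0 : P.Node) (τA : S.TA) : Prop :=
  ∀ (n : ℕ) (νs : ℕ → P.Node) (τs τs' : ℕ → S.TA), P.IsSimpleBinCycleL n νs τs τs' →
    P.ReachL ν0 τA (νs 0) (τs 0) → P.ReachL ν0 τA (νs 0) (τs' 0) →
    P.thetaL νs τs n = P.thetaL νs τs' n

/-- The trace width `W(P)`. -/
def traceWidth (P : PreProof S) : ℕ :=
  Finset.univ.sup fun ν : P.Node =>
    max (S.tvA (P.seqOf ν).1).card (S.tvC (P.seqOf ν).2).card

/-- The (binary left-hand) cycle threshold `C(P)`: the number of triples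
`(σ, σ', μ)` with `σ, σ' ∈ TraceVals_A(μ)`. -/
def cycThreshold (P : PreProof S) : ℕ :=
  ∑ ν : P.Node, (S.tvA (P.seqOf ν).1).card * (S.tvA (P.seqOf ν).1).card

/-- `maxStep(P)`: the maximum (finite) `δ1`-value over the edges of `P`. -/
def maxStepN (P : PreProof S) : ℕ :=
  sSup {k : ℕ | ∃ ν ν' τ τ', P.δ1 ν ν' τ τ' = some (k : Ordl)}

/-- The in-degree of the proof graph. -/
def inDeg (P : PreProof S) : ℕ :=
  Finset.univ.sup fun ν' : P.Node =>
    (Finset.univ.filter fun ν : P.Node => ν' ∈ P.children ν).card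

/-- The trace pair function of `P` is trace injective. -/
def TraceInjective (P : PreProof S) : Prop :=
  (∀ (ν ν' : P.Node) (τ τ' τ'' : S.TA),
    (P.δ1 ν ν' τ τ'').isSome → (P.δ1 ν ν' τ' τ'').isSome → τ = τ') ∧
  (∀ (ν ν' : P.Node) (σ σ' σ'' : S.TC),
    (P.δ2 ν ν' σ σ'').isSome → (P.δ2 ν ν' σ' σ'').isSome → σ = σ')

/-- `T_ν(σ)`: the set of antecedent trace values of `ν` equated to `σ`
by the sequent of `ν`. -/
def Tset (P : PreProof S) (O : OTF S) (ν : P.Node) (σ : S.TC) : Set S.TA :=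
  {τ : S.TA | τ ∈ S.tvA (P.seqOf ν).1 ∧ O.Equates (P.seqOf ν) τ σ}

end PreProof

/-! ### Weighted automata over the ordinal max-plus semiring -/

/-- The alphabet `Σ_P`. -/
abbrev Sig {S : CES} (P : PreProof S) : Type := P.Node ⊕ (Set S.TA × S.TC)

/-- States of the antecedent automata (`⊤ⁱ_μ` states are used only by the
approximate automata). -/
inductive AState (Node TA : Type) : Type
  | init : AState Node TA
  | pair : Node → TA → AState Node TA
  | bot : AState Node TA
  | top : AState Node TA
  | topn : Node → ℕ → AState Node TA

instance {Node TA : Type} : Inhabited (AState Node TA) := ⟨AState.init⟩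

/-- States of the consequent automaton. -/
inductive BState (Node TC : Type) : Type
  | init : BState Node TC
  | pair : Node → TC → BState Node TC
  | bot : BState Node TC

instance {Node TC : Type} : Inhabited (BState Node TC) := ⟨BState.init⟩

/-- Transition relation of the (full) antecedent automaton `𝒜^{(P,ν0)}_{(τ1,·)}`. -/
inductive ATrans {S : CES} (P : PreProof S) (O : OTF S) (ν0 : P.Node) (τ1 : S.TA) :
    AState P.Node S.TA → Sig P → AState P.Node S.TA → Prop
  | start : ATrans P O ν0 τ1 .init (Sum.inl ν0) (.pair ν0 τ1)
  | step {μ μ' : P.Node} {σ σ' : S.TA} (h1 : μ' ∈ P.children μ)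
      (h2 : (P.δ1 μ μ' σ σ').isSome) :
      ATrans P O ν0 τ1 (.pair μ σ) (Sum.inl μ') (.pair μ' σ')
  | toBot {μ : P.Node} {σ : S.TA} {σ' : S.TC} (h1 : P.Axiomatic μ)
      (h2 : σ' ∈ S.tvC (P.seqOf μ).2) (h3 : σ ∈ P.Tset O μ σ') :
      ATrans P O ν0 τ1 (.pair μ σ) (Sum.inr (P.Tset O μ σ', σ')) .bot
  | toTop {μ μ' : P.Node} {σ : S.TA} (h : μ' ∈ P.children μ) :
      ATrans P O ν0 τ1 (.pair μ σ) (Sum.inl μ') .top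
  | topLoop (μ : P.Node) : ATrans P O ν0 τ1 .top (Sum.inl μ) .top

/-- Transition relation of the approximate antecedent automaton `𝒜(n)^{(P,ν0)}_{(τ1,·)}`. -/
inductive ATransN {S : CES} (P : PreProof S) (O : OTF S) (n : ℕ) (ν0 : P.Node) (τ1 : S.TA) :
    AState P.Node S.TA → Sig P → AState P.Node S.TA → Prop
  | start : ATransN P O n ν0 τ1 .init (Sum.inl ν0) (.pair ν0 τ1)
  | step {μ μ' : P.Node} {σ σ' : S.TA} (h1 : μ' ∈ P.children μ)
      (h2 : (P.δ1 μ μ' σ σ').isSome) :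
      ATransN P O n ν0 τ1 (.pair μ σ) (Sum.inl μ') (.pair μ' σ')
  | toBot {μ : P.Node} {σ : S.TA} {σ' : S.TC} (h1 : P.Axiomatic μ)
      (h2 : σ' ∈ S.tvC (P.seqOf μ).2) (h3 : σ ∈ P.Tset O μ σ') :
      ATransN P O n ν0 τ1 (.pair μ σ) (Sum.inr (P.Tset O μ σ', σ')) .bot
  | toTopn {μ μ' : P.Node} {σ : S.TA} (h : μ' ∈ P.children μ) :
      ATransN P O n ν0 τ1 (.pair μ σ) (Sum.inl μ') (.topn μ' 1)
  | topnStay {μ μ' : P.Node} {i : ℕ} (h1 : 0 < i) (h2 : i ≤ n) (h3 : μ' ≠ μ) :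
      ATransN P O n ν0 τ1 (.topn μ i) (Sum.inl μ') (.topn μ i)
  | topnStep {μ : P.Node} {i : ℕ} (h1 : 0 < i) (h2 : i < n) :
      ATransN P O n ν0 τ1 (.topn μ i) (Sum.inl μ) (.topn μ (i + 1))

/-- Transition relation of the consequent automaton `ℬ^{(P,ν0)}_{(·,τ2)}`. -/
inductive BTrans {S : CES} (P : PreProof S) (O : OTF S) (Excl : P.Node → S.TC → Prop)
    (ν0 : P.Node) (τ2 : S.TC) :
    BState P.Node S.TC → Sig P → BState P.Node S.TC → Prop
  | start : BTrans P O Excl ν0 τ2 .init (Sum.inl ν0) (.pair ν0 τ2)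
  | step {μ μ' : P.Node} {σ σ' : S.TC} (h1 : μ' ∈ P.children μ)
      (h2 : (P.δ2 μ μ' σ σ').isSome) :
      BTrans P O Excl ν0 τ2 (.pair μ σ) (Sum.inl μ') (.pair μ' σ')
  | toBot {μ : P.Node} {σ : S.TC} (h1 : P.Axiomatic μ) (h2 : σ ∈ S.tvC (P.seqOf μ).2)
      (h3 : ¬ P.Ground O μ σ) (h4 : ¬ Excl μ σ) :
      BTrans P O Excl ν0 τ2 (.pair μ σ) (Sum.inr (P.Tset O μ σ, σ)) .bot

/-- Weight function of the antecedent automata (the only potentially non-zero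
weights sit on pair-to-pair transitions, where they are given by `δ1`). -/
def Awt {S : CES} (P : PreProof S) :
    AState P.Node S.TA → Sig P → AState P.Node S.TA → Ordl
  | .pair μ σ, _, .pair μ' σ' => (P.δ1 μ μ' σ σ').getD 0
  | _, _, _ => 0

/-- Weight function of the consequent automaton. -/
def Bwt {S : CES} (P : PreProof S) :
    BState P.Node S.TC → Sig P → BState P.Node S.TC → Ordl
  | .pair μ σ, _, .pair μ' σ' => (P.δ2 μ μ' σ σ').getD 0
  | _, _, _ => 0

/-- `q` is a run over the word `σ 0, …, σ (m-1)` (from the initial state `q0`). -/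
def IsRun {Q A : Type*} (T : Q → A → Q → Prop) (q0 : Q) (m : ℕ) (σ : ℕ → A)
    (q : ℕ → Q) : Prop :=
  q 0 = q0 ∧ ∀ i < m, T (q i) (σ i) (q (i + 1))

/-- The value of a run: the `⊗`-product (i.e. reverse ordinal sum) of the
weights of its transitions. -/
def runVal {Q A : Type*} (wt : Q → A → Q → Ordl) (m : ℕ) (σ : ℕ → A) (q : ℕ → Q) : Ordl :=
  revSum (fun i => wt (q i) (σ i) (q (i + 1))) m

/-- The quantitative language of a weighted automaton: `⊥` (i.e. `none`) if the
word admits no accepting run, and otherwise the supremum (maximum) of the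
values of its accepting runs. -/
def Lang {Q A : Type*} (T : Q → A → Q → Prop) (q0 : Q) (F : Q → Prop)
    (wt : Q → A → Q → Ordl) (m : ℕ) (σ : ℕ → A) : Option Ordl := by
  classical
  exact if (∃ q : ℕ → Q, IsRun T q0 m σ q ∧ F (q m)) then
    some (sSup {v : Ordl | ∃ q : ℕ → Q, IsRun T q0 m σ q ∧ F (q m) ∧ v = runVal wt m σ q})
  else none

/-- Ordering of quantitative language values, with `⊥ = none` below everything. -/
def OptLE : Option Ordl → Option Ordl → Prop
  | none, _ => True
  | some _, none => False
  | some a, some b => a ≤ b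

/-- Strict ordering of quantitative language values on defined (non-`⊥`) values. -/
def OptLT : Option Ordl → Option Ordl → Prop
  | none, _ => True
  | some _, none => False
  | some a, some b => a < b

/-- `∼` on language values: `<` when `strict`, else `≤`. -/
def OptOrd (strict : Bool) : Option Ordl → Option Ordl → Prop :=
  fun x y => if strict then OptLT x y else OptLE x y

/-- Final states of the antecedent automata: all non-initial states. -/
def AFinal {Node TA : Type} : AState Node TA → Prop := fun q => q ≠ .init

/-- Final states of the consequent automaton. -/
def BFinal {S : CES} (P : PreProof S) (O : OTF S) (Excl : P.Node → S.TC → Prop) :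
    BState P.Node S.TC → Prop
  | .init => False
  | .bot => True
  | .pair μ σ => ¬ Excl μ σ ∧
      ((¬ P.Axiomatic μ ∧ P.TerminalR μ σ) ∨ (P.Axiomatic μ ∧ P.Ground O μ σ))

/-- The quantitative language of `𝒜^{(P,ν0)}_{(τ1,τ2)}` (it does not depend on `τ2`). -/
def LangA {S : CES} (P : PreProof S) (O : OTF S) (ν0 : P.Node) (τ1 : S.TA) :
    ℕ → (ℕ → Sig P) → Option Ordl :=
  Lang (ATrans P O ν0 τ1) .init AFinal (Awt P)

/-- The quantitative language of `𝒜(n)^{(P,ν0)}_{(τ1,τ2)}`. -/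
def LangAN {S : CES} (P : PreProof S) (O : OTF S) (n : ℕ) (ν0 : P.Node) (τ1 : S.TA) :
    ℕ → (ℕ → Sig P) → Option Ordl :=
  Lang (ATransN P O n ν0 τ1) .init AFinal (Awt P)

/-- The quantitative language of `ℬ^{(P,ν0)}_{(τ1,τ2)}` (it does not depend on `τ1`). -/
def LangB {S : CES} (P : PreProof S) (O : OTF S) (Excl : P.Node → S.TC → Prop)
    (ν0 : P.Node) (τ2 : S.TC) : ℕ → (ℕ → Sig P) → Option Ordl :=
  Lang (BTrans P O Excl ν0 τ2) .init (BFinal P O Excl) (Bwt P)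

/-- The automaton `ℬ^{(P,ν0)}_{(·,τ2)}` is grounded: every reachable final pair
state carries a trace value that is ground w.r.t. its node. -/
def BGrounded {S : CES} (P : PreProof S) (O : OTF S) (Excl : P.Node → S.TC → Prop)
    (ν0 : P.Node) (τ2 : S.TC) : Prop :=
  ∀ (μ : P.Node) (σ : S.TC),
    (∃ (m : ℕ) (w : ℕ → Sig P) (q : ℕ → BState P.Node S.TC),
      IsRun (BTrans P O Excl ν0 τ2) .init m w q ∧ q m = .pair μ σ ∧
        BFinal P O Excl (.pair μ σ)) →
    P.Ground O μ σ

/-- Collapse the graded sink states of an approximate automaton onto `⊤`. -/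
def collapseTop {Node TA : Type} : AState Node TA → AState Node TA
  | .topn _ _ => .top
  | q => q

/-- The number of occurrences of the letter `a` among `σ lo, …, σ (hi - 1)`. -/
def cnt {A : Type*} (σ : ℕ → A) (a : A) (lo hi : ℕ) : ℕ := by
  classical
  exact ((Finset.Ico lo hi).filter fun t => σ t = a).card

/-- The set of runs (as lists of states) of an automaton on a word. -/
def RunsOn {Q A : Type*} [Inhabited Q] (T : Q → A → Q → Prop) (q0 : Q)
    (w : List A) : Set (List Q) :=
  {l : List Q | l.length = w.length + 1 ∧ l.getD 0 default = q0 ∧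
    ∀ i, ∀ h : i < w.length, T (l.getD i default) (w.get ⟨i, h⟩) (l.getD (i + 1) default)}

end

/-- **Runs of the Antecedent Automaton.**
If `νs 0, …, νs (n-1)` is a path in a cyclic proof `P` and `q` is a run of
`𝒜^{(P,ν0)}_{(τ,τ')}` over the word `νs`, then there is a left-hand trace
`τs 0, …, τs (k-1)` (`k ≤ n`) with `τs 0 = τ` such that the run states are
`(νs i, τs i)` for the first `k` letters and `⊤` afterwards.  Moreover if the
final state is a pair on `νs (n-1)` then `k = n` and its trace value is
`τs (n-1)`. -/
theorem runs_of_antecedent_automaton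
    (S : CES) (P : PreProof S) (O : OTF S)
    (hproof : P.IsCyclicProof)
    (ν0 : P.Node) (τ : S.TA) (τ' : S.TC) (hτ : τ ∈ S.tvA (P.seqOf ν0).1)
    (n : ℕ) (hn : 1 ≤ n) (νs : ℕ → P.Node) (hpath : P.IsPath n νs)
    (q : ℕ → AState P.Node S.TA)
    (hrun : IsRun (ATrans P O ν0 τ) AState.init n (fun i => Sum.inl (νs i)) q) :
    ∃ (k : ℕ) (τs : ℕ → S.TA),
      1 ≤ k ∧ k ≤ n ∧ τs 0 = τ ∧ P.FollowsL n νs k τs ∧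
      (∀ i < k, q (i + 1) = AState.pair (νs i) (τs i)) ∧
      (∀ j, k ≤ j → j < n → q (j + 1) = AState.top) ∧
      (∀ τ'' : S.TA, q n = AState.pair (νs (n - 1)) τ'' →
        k = n ∧ τ'' = τs (n - 1)) := by
  obtain ⟨h0, ht⟩ := hrun
  let f : AState P.Node S.TA → S.TA := fun s => match s with
    | AState.pair _ σ => σ
    | _ => τ
  have hf : ∀ μ σ, f (AState.pair μ σ) = σ := fun _ _ => rfl
  have hstart : νs 0 = ν0 ∧ q 1 = AState.pair (νs 0) τ := by
    have h := ht 0 (by omega)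
    rw [h0] at h
    simp only [zero_add] at h
    generalize hq : q 1 = s at h
    generalize hw : νs 0 = w at h
    cases h
    exact ⟨rfl, rfl⟩
  have key : ∀ m, m < n → ∃ k, 1 ≤ k ∧ k ≤ m + 1 ∧
      (∀ i < k, q (i + 1) = AState.pair (νs i) (f (q (i + 1)))) ∧
      (∀ j, k ≤ j → j ≤ m → q (j + 1) = AState.top) := by
    intro m
    induction m with
    | zero =>
      intro _
      refine ⟨1, le_refl _, le_refl _, ?_, ?_⟩
      · intro i hi
        obtain rfl : i = 0 := by omega
        simp only [zero_add]
        rw [hstart.2, hf (νs 0)]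
      · intro j h1 h2
        omega
    | succ m ih =>
      intro hm
      obtain ⟨k, h1, h2, h3, h4⟩ := ih (by omega)
      have h := ht (m + 1) hm
      by_cases hk : k = m + 1
      · subst hk
        have hq := h3 m (by omega)
        rw [hq] at h
        have hc : q (m + 1 + 1) = AState.pair (νs (m + 1)) (f (q (m + 1 + 1))) ∨
            q (m + 1 + 1) = AState.top := by
          simp only at h
          generalize q (m + 1 + 1) = s at h
          generalize νs (m + 1) = w at h
          cases h
          · exact Or.inl rfl
          · exact Or.inr rfl
        rcases hc with hc | hc
        · refine ⟨m + 2, by omega, by omega, ?_, ?_⟩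
          · intro i hi
            by_cases hi' : i = m + 1
            · subst hi'
              exact hc
            · exact h3 i (by omega)
          · intro j _ _
            omega
        · refine ⟨m + 1, by omega, by omega, h3, ?_⟩
          intro j _ _
          obtain rfl : j = m + 1 := by omega
          exact hc
      · refine ⟨k, h1, by omega, h3, ?_⟩
        intro j hj hj'
        by_cases hjm : j = m + 1
        · subst hjm
          rw [h4 m (by omega) le_rfl] at h
          generalize q (m + 1 + 1) = s at h
          cases h
          rfl
        · exact h4 j hj (by omega)
  obtain ⟨k, h1, h2, h3, h4⟩ := key (n - 1) (by omega)
  have hδ : ∀ i, i + 1 < k →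
      (P.δ1 (νs i) (νs (i + 1)) (f (q (i + 1))) (f (q (i + 1 + 1)))).isSome := by
    intro i hi
    have h := ht (i + 1) (by omega)
    rw [h3 i (by omega), h3 (i + 1) hi] at h
    cases h with
    | step _ h => exact h
  refine ⟨k, fun i => f (q (i + 1)), h1, by omega, ?_, ⟨by omega, ?_, hδ⟩, h3, ?_, ?_⟩
  · simp only [zero_add]
    rw [hstart.2, hf (νs 0)]
  · intro i hi
    cases i with
    | zero =>
      simp only [zero_add]
      rw [hstart.2, hf (νs 0), hstart.1]
      exact hτ
    | succ i => exact (P.δ1_dom _ _ _ _ (hδ i hi)).2.2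
  · intro j hj hj'
    exact h4 j hj (by omega)
  · intro τ'' hq
    have hn' : n - 1 + 1 = n := by omega
    by_cases hk : k = n
    · refine ⟨hk, ?_⟩
      simp only [hn']
      rw [hq, hf (νs (n - 1))]
    · have h := h4 (n - 1) (by omega) le_rfl
      rw [hn', hq] at h
      cases h
end

section
/- Faithfulness of the Antecedent Automaton: Let ν⃗_{1..n} be a path in a cyclic proof P and τ⃗_{1..k} (k ≤ n) a left-hand trace. Then τ⃗ follows ν⃗ if and only if there exists a run ρ : q_𝒜 →^{ν⃗} q_n of 𝒜^{(P,ν⃗_1)}_{(τ⃗_1, τ')} such that q_i = (ν⃗_i, τ⃗_i) for each i ∈ {1,…,k}. Moreover V(ρ) ≥ Θ_ν⃗(τ⃗), and if furthermore k = n or q_{k+1} = ⊤, then Θ_ν⃗(τ⃗) ≥ V(ρ). -/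
theorem revSum_mono_len (d : ℕ → Ordl) {a b : ℕ} (h : a ≤ b) : revSum d a ≤ revSum d b := by
  induction h with
  | refl => exact le_rfl
  | step _ ih => exact ih.trans le_add_self

theorem revSum_const_tail (d : ℕ → Ordl) {a b : ℕ} (h : a ≤ b)
    (hd : ∀ i, a ≤ i → i < b → d i = 0) : revSum d b = revSum d a := by
  induction h with
  | refl => rfl
  | @step m hm ih =>
    have h0 : d m = 0 := hd m hm (Nat.lt_succ_self m)
    have h1 := ih (fun i hi hi' => hd i hi (Nat.lt_succ_of_lt hi'))
    show d m + revSum d m = _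
    rw [h0, h1, zero_add]

/-- **Faithfulness of the Antecedent Automaton.**
For a path `νs 0, …, νs (n-1)` in a cyclic proof `P` and a sequence of
antecedent trace values `τs 0, …, τs (k-1)` (`k ≤ n`): `τs` is a left-hand
trace following `νs` iff there is a run of `𝒜^{(P,νs 0)}_{(τs 0,τ')}` over
`νs` whose states are `(νs i, τs i)` for the first `k` letters.  Moreover any
such run `q` satisfies `V(q) ≥ Θ_νs(τs)`, and if `k = n` or `q (k+1) = ⊤`
then also `Θ_νs(τs) ≥ V(q)`. -/
theorem faithfulness_of_antecedent_automaton
    (S : CES) (P : PreProof S) (O : OTF S)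
    (hproof : P.IsCyclicProof)
    (τ' : S.TC) (n k : ℕ) (hk : 1 ≤ k) (hkn : k ≤ n)
    (νs : ℕ → P.Node) (hpath : P.IsPath n νs)
    (τs : ℕ → S.TA) (hmem0 : τs 0 ∈ S.tvA (P.seqOf (νs 0)).1) :
    (P.FollowsL n νs k τs ↔
      ∃ q : ℕ → AState P.Node S.TA,
        IsRun (ATrans P O (νs 0) (τs 0)) AState.init n (fun i => Sum.inl (νs i)) q ∧
        ∀ i < k, q (i + 1) = AState.pair (νs i) (τs i)) ∧
    (∀ q : ℕ → AState P.Node S.TA,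
      IsRun (ATrans P O (νs 0) (τs 0)) AState.init n (fun i => Sum.inl (νs i)) q →
      (∀ i < k, q (i + 1) = AState.pair (νs i) (τs i)) →
      P.thetaL νs τs k ≤ runVal (Awt P) n (fun i => Sum.inl (νs i)) q ∧
        ((k = n ∨ q (k + 1) = AState.top) →
          runVal (Awt P) n (fun i => Sum.inl (νs i)) q ≤ P.thetaL νs τs k)) := by
  have hval : ∀ q : ℕ → AState P.Node S.TA,
      IsRun (ATrans P O (νs 0) (τs 0)) AState.init n (fun i => Sum.inl (νs i)) q →
      (∀ i < k, q (i + 1) = AState.pair (νs i) (τs i)) →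
      ∀ j, j + 1 ≤ k →
        revSum (fun i => Awt P (q i) (Sum.inl (νs i)) (q (i + 1))) (j + 1)
          = revSum (P.stepL νs τs) j := by
    intro q hq hs j
    induction j with
    | zero =>
      intro _
      show Awt P (q 0) (Sum.inl (νs 0)) (q (0 + 1)) + 0 = 0
      rw [hq.1]
      simp [Awt]
    | succ j ih =>
      intro hj
      have h1 := ih (by omega)
      show Awt P (q (j + 1)) (Sum.inl (νs (j + 1))) (q (j + 1 + 1)) + revSum _ (j + 1)
        = P.stepL νs τs j + revSum _ j
      rw [h1, hs j (by omega), hs (j + 1) (by omega)]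
      rfl
  refine ⟨⟨?_, ?_⟩, ?_⟩
  · rintro ⟨_, _, h3⟩
    refine ⟨fun i => if i = 0 then .init else if i ≤ k then .pair (νs (i - 1)) (τs (i - 1))
      else .top, ⟨by simp, ?_⟩, ?_⟩
    · intro i hi
      rcases i with _ | i
      · simp only [if_true, Nat.zero_add, Nat.one_ne_zero, if_false, if_pos hk]
        exact ATrans.start
      · by_cases h1 : i + 1 + 1 ≤ k
        · have h2 : i + 1 ≤ k := by omega
          simp only [Nat.succ_ne_zero, if_false, if_pos h1, if_pos h2, Nat.add_sub_cancel]
          exact ATrans.step (hpath i hi) (h3 i (by omega))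
        · by_cases h2 : i + 1 ≤ k
          · simp only [Nat.succ_ne_zero, if_false, if_neg h1, if_pos h2, Nat.add_sub_cancel]
            exact ATrans.toTop (hpath i hi)
          · simp only [Nat.succ_ne_zero, if_false, if_neg h1, if_neg h2]
            exact ATrans.topLoop _
    · intro i hi
      have h2 : i + 1 ≤ k := hi
      simp only [Nat.succ_ne_zero, if_false, if_pos h2, Nat.add_sub_cancel]
  · rintro ⟨q, hq, hs⟩
    have hstep : ∀ i, i + 1 < k →
        (P.δ1 (νs i) (νs (i + 1)) (τs i) (τs (i + 1))).isSome := by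
      intro i hi
      have ht := hq.2 (i + 1) (by omega)
      rw [hs i (by omega), hs (i + 1) hi] at ht
      cases ht with
      | step h1 h2 => exact h2
    refine ⟨hkn, ?_, hstep⟩
    intro i hi
    rcases i with _ | i
    · exact hmem0
    · exact (P.δ1_dom _ _ _ _ (hstep i hi)).2.2
  · intro q hq hs
    obtain ⟨j, rfl⟩ : ∃ j, k = j + 1 := ⟨k - 1, by omega⟩
    have hv := hval q hq hs j le_rfl
    have hth : P.thetaL νs τs (j + 1)
        = revSum (fun i => Awt P (q i) (Sum.inl (νs i)) (q (i + 1))) (j + 1) := hv.symm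
    rw [hth]
    refine ⟨revSum_mono_len _ hkn, ?_⟩
    intro hor
    refine le_of_eq (revSum_const_tail _ hkn ?_)
    intro i hi hin
    rcases hor with h | h
    · omega
    · have htop : ∀ m, j + 1 + 1 ≤ m → m ≤ n → q m = .top := by
        intro m hm
        induction hm with
        | refl => intro _; exact h
        | @step m hm ih =>
          intro hmn
          have ht := hq.2 m (by omega)
          rw [ih (by omega)] at ht
          generalize hx : q (m + 1) = x at ht
          cases ht with
          | topLoop => rfl
      show Awt P (q i) _ (q (i + 1)) = 0
      rw [htop (i + 1) (by omega) (by omega)]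
      cases q i <;> rfl
end

section
/- Faithfulness of the Consequent Automaton: Let ν⃗ be a finite sequence of nodes of a cyclic proof P and τ⃗_{1..n} a right-hand trace. Then ν⃗ is a path in P followed by τ⃗ if and only if ρ = q_𝒞 ν⃗_1 (ν⃗_1, τ⃗_1) … ν⃗_n (ν⃗_n, τ⃗_n) is a run of the weighted automaton ℬ^{(P,ν⃗_1)}_{(τ', τ⃗_1)}. Moreover V(ρ) = Θ_ν⃗(τ⃗). -/
theorem revSum_shift_aux (d e : ℕ → Ordl) (h0 : d 0 = 0) (h : ∀ i, d (i + 1) = e i) (k : ℕ) :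
    revSum d (k + 1) = revSum e k := by
  induction k with
  | zero => simp [revSum, h0]
  | succ k ih => rw [revSum, ih, h, revSum]

/-- **Faithfulness of the Consequent Automaton.**
Let `νs 0, …, νs (n-1)` be a finite sequence of nodes of a cyclic proof `P`
and `τs 0, …, τs (n-1)` a sequence of consequent trace values.  Then `νs` is a
path in `P` followed by the right-hand trace `τs` iff
`ρ = q_𝒞 (νs 0) (νs 0, τs 0) … (νs (n-1)) (νs (n-1), τs (n-1))` is a run of
`ℬ^{(P,νs 0)}_{(τ'', τs 0)}`.  Moreover `V(ρ) = Θ_νs(τs)`. -/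
theorem faithfulness_of_consequent_automaton
    (S : CES) (P : PreProof S) (O : OTF S)
    (Excl : P.Node → S.TC → Prop) (hExcl : P.ExclOK O Excl)
    (hproof : P.IsCyclicProof)
    (τ'' : S.TA) (n : ℕ) (hn : 1 ≤ n) (νs : ℕ → P.Node)
    (τs : ℕ → S.TC) (hmem0 : τs 0 ∈ S.tvC (P.seqOf (νs 0)).2) :
    ((P.IsPath n νs ∧ P.FollowsR n νs n τs) ↔
      IsRun (BTrans P O Excl (νs 0) (τs 0)) BState.init n (fun i => Sum.inl (νs i))
        (fun i => match i with
          | 0 => BState.init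
          | Nat.succ j => BState.pair (νs j) (τs j))) ∧
    (IsRun (BTrans P O Excl (νs 0) (τs 0)) BState.init n (fun i => Sum.inl (νs i))
        (fun i => match i with
          | 0 => BState.init
          | Nat.succ j => BState.pair (νs j) (τs j)) →
      runVal (Bwt P) n (fun i => Sum.inl (νs i))
        (fun i => match i with
          | 0 => BState.init
          | Nat.succ j => BState.pair (νs j) (τs j)) = P.thetaR νs τs n) := by
  refine ⟨⟨?_, ?_⟩, ?_⟩
  · rintro ⟨hp, _, _, hf⟩
    refine ⟨rfl, ?_⟩
    intro i hi
    cases i with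
    | zero => exact BTrans.start
    | succ j => exact BTrans.step (hp j hi) (hf j hi)
  · rintro ⟨_, hr⟩
    have key : ∀ i, i + 1 < n → νs (i + 1) ∈ P.children (νs i) ∧
        (P.δ2 (νs i) (νs (i + 1)) (τs i) (τs (i + 1))).isSome := by
      intro i hi
      have h := hr (i + 1) hi
      cases h with
      | step h1 h2 => exact ⟨h1, h2⟩
    refine ⟨fun i hi => (key i hi).1, le_rfl, ?_, fun i hi => (key i hi).2⟩
    intro i hi
    cases i with
    | zero => exact hmem0
    | succ j => exact (P.δ2_dom _ _ _ _ (key j hi).2).2.2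
  · intro _
    obtain ⟨k, rfl⟩ : ∃ k, n = k + 1 := ⟨n - 1, by omega⟩
    exact revSum_shift_aux _ _ rfl (fun _ => rfl) k
end

section
/- Accepting Runs Characterise Positive Maximal Traces: τ⃗_{1..n} is a positive maximal right-hand trace following a path ν⃗ in a cyclic proof P if and only if ρ is an accepting run of ℬ^{(P,ν⃗_1)}_{(τ', τ⃗_1)} where either (i) ρ = q_𝒞 ν⃗_1 (ν⃗_1, τ⃗_1) … ν⃗_n (ν⃗_n, τ⃗_n), in which case either τ⃗ is fully maximal or τ⃗_n is ground with respect to ν⃗_n; or (ii) ρ = q_𝒞 ν⃗_1 (ν⃗_1, τ⃗_1) … ν⃗_n (ν⃗_n, τ⃗_n) (T_{ν⃗_n}(τ⃗_n), τ⃗_n) ⊥, in which case τ⃗ is partially maximal. Moreover V(ρ) = Θ_ν⃗(τ⃗). -/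
/-- The canonical state sequence `q_𝒞 (ν 0, τ 0) (ν 1, τ 1) …` of the
consequent automaton along a path/trace. -/
def bRunStates {S : CES} (P : PreProof S) (νs : ℕ → P.Node) (τs : ℕ → S.TC) :
    ℕ → BState P.Node S.TC :=
  fun i => match i with
    | 0 => BState.init
    | Nat.succ j => BState.pair (νs j) (τs j)

theorem aux_run {S : CES} (P : PreProof S) (O : OTF S) (Excl : P.Node → S.TC → Prop)
    (k : ℕ) (νs : ℕ → P.Node) (τs : ℕ → S.TC) :
    IsRun (BTrans P O Excl (νs 0) (τs 0)) BState.init (k + 1) (fun i => Sum.inl (νs i))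
      (bRunStates P νs τs) ↔
    ∀ i < k, νs (i + 1) ∈ P.children (νs i) ∧
      (P.δ2 (νs i) (νs (i + 1)) (τs i) (τs (i + 1))).isSome := by
  constructor
  · rintro ⟨_, h⟩ i hi
    have h' : BTrans P O Excl (νs 0) (τs 0) (.pair (νs i) (τs i)) (Sum.inl (νs (i + 1)))
      (.pair (νs (i + 1)) (τs (i + 1))) := h (i + 1) (by omega)
    cases h' with
    | step h1 h2 => exact ⟨h1, h2⟩
  · intro h
    refine ⟨rfl, ?_⟩
    intro i hi
    cases i with
    | zero => exact BTrans.start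
    | succ j => exact BTrans.step (h j (by omega)).1 (h j (by omega)).2

theorem aux_run2 {S : CES} (P : PreProof S) (O : OTF S) (Excl : P.Node → S.TC → Prop)
    (k : ℕ) (νs : ℕ → P.Node) (τs : ℕ → S.TC) (a : Set S.TA × S.TC) :
    IsRun (BTrans P O Excl (νs 0) (τs 0)) BState.init (k + 1 + 1)
      (fun i => if i < k + 1 then Sum.inl (νs i) else Sum.inr a)
      (fun i => if i ≤ k + 1 then bRunStates P νs τs i else BState.bot) ↔
    IsRun (BTrans P O Excl (νs 0) (τs 0)) BState.init (k + 1) (fun i => Sum.inl (νs i))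
      (bRunStates P νs τs) ∧
    BTrans P O Excl (νs 0) (τs 0) (.pair (νs k) (τs k)) (Sum.inr a) .bot := by
  constructor
  · rintro ⟨_, h⟩
    refine ⟨⟨rfl, ?_⟩, ?_⟩
    · intro i hi
      have h' := h i (by omega)
      simpa [hi, hi.le, Nat.le_of_lt_succ hi] using h'
    · have h' := h (k + 1) (by omega)
      simpa [bRunStates] using h'
  · rintro ⟨⟨_, h⟩, hb⟩
    refine ⟨by simp [bRunStates], ?_⟩
    intro i hi
    rcases Nat.lt_succ_iff_lt_or_eq.1 hi with hi | rfl
    · have h' := h i hi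
      simpa [hi, hi.le, Nat.le_of_lt_succ hi] using h'
    · simpa [bRunStates] using hb

theorem revSum_shift (f : ℕ → Ordl) (k : ℕ) :
    revSum f (k + 1) = revSum (fun i => f (i + 1)) k + f 0 := by
  induction k with
  | zero => simp [revSum]
  | succ k ih => rw [revSum, ih, ← add_assoc]; rfl

theorem revSum_congr (f g : ℕ → Ordl) (k : ℕ) (h : ∀ i < k, f i = g i) :
    revSum f k = revSum g k := by
  induction k with
  | zero => rfl
  | succ k ih => rw [revSum, revSum, h k (by omega), ih (fun i hi => h i (by omega))]

theorem aux_val {S : CES} (P : PreProof S) (k : ℕ) (νs : ℕ → P.Node) (τs : ℕ → S.TC) :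
    runVal (Bwt P) (k + 1) (fun i => Sum.inl (νs i)) (bRunStates P νs τs)
      = P.thetaR νs τs (k + 1) := by
  unfold runVal PreProof.thetaR
  rw [revSum_shift]
  have : Bwt P (bRunStates P νs τs 0) (Sum.inl (νs 0)) (bRunStates P νs τs (0 + 1)) = 0 := rfl
  rw [this, add_zero]
  rfl

/-- **Accepting Runs Characterise Positive Maximal Traces.**
`τs 0, …, τs (n-1)` is a positive maximal right-hand trace following the path
`νs` in a cyclic proof `P` iff `ρ` is an accepting run of
`ℬ^{(P,νs 0)}_{(τ'', τs 0)}` where either (i)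
`ρ = q_𝒞 (νs 0) (νs 0, τs 0) … (νs (n-1)) (νs (n-1), τs (n-1))` — in which
case the trace is fully maximal or `τs (n-1)` is ground w.r.t. `νs (n-1)` —
or (ii) `ρ` additionally steps to `⊥` via the letter
`(T_{νs (n-1)}(τs (n-1)), τs (n-1))` — in which case the trace is partially
maximal.  Moreover `V(ρ) = Θ_νs(τs)`. -/
theorem accepting_runs_characterise_positive_maximal_traces
    (S : CES) (P : PreProof S) (O : OTF S)
    (Excl : P.Node → S.TC → Prop) (hExcl : P.ExclOK O Excl)
    (hproof : P.IsCyclicProof)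
    (τ'' : S.TA) (n : ℕ) (hn : 1 ≤ n) (νs : ℕ → P.Node)
    (τs : ℕ → S.TC) (hmem0 : τs 0 ∈ S.tvC (P.seqOf (νs 0)).2) :
    ((P.IsPath n νs ∧ P.FollowsR n νs n τs ∧
        P.TerminalR (νs (n - 1)) (τs (n - 1)) ∧ ¬ Excl (νs (n - 1)) (τs (n - 1))) ↔
      ((IsRun (BTrans P O Excl (νs 0) (τs 0)) BState.init n (fun i => Sum.inl (νs i))
          (bRunStates P νs τs) ∧
        BFinal P O Excl (bRunStates P νs τs n) ∧
        (¬ P.Axiomatic (νs (n - 1)) ∨ P.Ground O (νs (n - 1)) (τs (n - 1)))) ∨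
       (IsRun (BTrans P O Excl (νs 0) (τs 0)) BState.init (n + 1)
          (fun i => if i < n then Sum.inl (νs i)
            else Sum.inr (P.Tset O (νs (n - 1)) (τs (n - 1)), τs (n - 1)))
          (fun i => if i ≤ n then bRunStates P νs τs i else BState.bot) ∧
        BFinal P O Excl ((fun i => if i ≤ n then bRunStates P νs τs i else BState.bot) (n + 1)) ∧
        P.Axiomatic (νs (n - 1))))) ∧
    (IsRun (BTrans P O Excl (νs 0) (τs 0)) BState.init n (fun i => Sum.inl (νs i))
        (bRunStates P νs τs) →
      runVal (Bwt P) n (fun i => Sum.inl (νs i)) (bRunStates P νs τs) = P.thetaR νs τs n) ∧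
    (IsRun (BTrans P O Excl (νs 0) (τs 0)) BState.init (n + 1)
        (fun i => if i < n then Sum.inl (νs i)
          else Sum.inr (P.Tset O (νs (n - 1)) (τs (n - 1)), τs (n - 1)))
        (fun i => if i ≤ n then bRunStates P νs τs i else BState.bot) →
      runVal (Bwt P) (n + 1)
        (fun i => if i < n then Sum.inl (νs i)
          else Sum.inr (P.Tset O (νs (n - 1)) (τs (n - 1)), τs (n - 1)))
        (fun i => if i ≤ n then bRunStates P νs τs i else BState.bot) = P.thetaR νs τs n) := by
  obtain ⟨k, rfl⟩ : ∃ k, n = k + 1 := ⟨n - 1, by omega⟩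
  simp only [Nat.add_sub_cancel]
  refine ⟨?_, fun _ => aux_val P k νs τs, fun _ => ?_⟩
  · rw [aux_run2, aux_run]
    constructor
    · rintro ⟨hp, ⟨_, hm, hf⟩, ht, he⟩
      have hr : ∀ i < k, νs (i + 1) ∈ P.children (νs i) ∧
          (P.δ2 (νs i) (νs (i + 1)) (τs i) (τs (i + 1))).isSome :=
        fun i hi => ⟨hp i (by omega), hf i (by omega)⟩
      by_cases ha : P.Axiomatic (νs k)
      · by_cases hg : P.Ground O (νs k) (τs k)
        · exact Or.inl ⟨hr, ⟨he, Or.inr ⟨ha, hg⟩⟩, Or.inr hg⟩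
        · refine Or.inr ⟨⟨hr, BTrans.toBot ha (hm k (by omega)) hg he⟩, ?_, ha⟩
          simp [BFinal]
      · exact Or.inl ⟨hr, ⟨he, Or.inl ⟨ha, ht⟩⟩, Or.inl ha⟩
    · intro h
      have hr : ∀ i < k, νs (i + 1) ∈ P.children (νs i) ∧
          (P.δ2 (νs i) (νs (i + 1)) (τs i) (τs (i + 1))).isSome := by
        rcases h with h | h
        · exact h.1
        · exact h.1.1
      have hax : P.Axiomatic (νs k) → P.TerminalR (νs k) (τs k) := by
        intro ha ν' hν'
        rw [show P.children (νs k) = [] from ha] at hν'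
        simp at hν'
      refine ⟨fun i hi => (hr i (by omega)).1, ⟨le_rfl, ?_, fun i hi => (hr i (by omega)).2⟩, ?_⟩
      · intro i hi
        cases i with
        | zero => exact hmem0
        | succ j => exact (P.δ2_dom _ _ _ _ (hr j (by omega)).2).2.2
      · rcases h with ⟨_, ⟨he, hF⟩, _⟩ | ⟨⟨_, hb⟩, _, ha⟩
        · refine ⟨?_, he⟩
          rcases hF with ⟨_, ht⟩ | ⟨ha, _⟩
          · exact ht
          · exact hax ha
        · refine ⟨hax ha, ?_⟩
          cases hb with
          | toBot h1 h2 h3 h4 => exact h4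
  · rw [← aux_val]
    unfold runVal
    rw [revSum]
    have : Bwt P (if k + 1 ≤ k + 1 then bRunStates P νs τs (k + 1) else BState.bot)
        (if k + 1 < k + 1 then Sum.inl (νs (k + 1))
          else Sum.inr (P.Tset O (νs k) (τs k), τs k))
        (if k + 1 + 1 ≤ k + 1 then bRunStates P νs τs (k + 1 + 1) else BState.bot) = 0 := by
      simp [bRunStates, Bwt]
    rw [this, zero_add]
    apply revSum_congr
    intro i hi
    simp [hi, hi.le, Nat.le_of_lt_succ hi]
end

section
/- Soundness of the Approximate Automata (run level): If ρ : q_𝒜 →^{σ⃗_{1..m}} q_m is a run of the approximate automaton 𝒜(n)^{(P,ν)}_{(τ,τ')}, then ρ' : q_𝒜 →^{σ⃗_{1..m}} q'_m is a run of the full automaton 𝒜(ω)^{(P,ν)}_{(τ,τ')} = 𝒜^{(P,ν)}_{(τ,τ')}, where q'_i = ⊤ if q_i = ⊤^j_μ for some j and μ, and q'_i = q_i otherwise, for all 0 < i ≤ m; moreover V(ρ') = V(ρ). -/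
/-- **Soundness of the Approximate Automata, run level.**
Every run of `𝒜(n)^{(P,ν0)}_{(τ1,·)}` yields a run of the full automaton
`𝒜(ω) = 𝒜^{(P,ν0)}_{(τ1,·)}` over the same word, obtained by collapsing the
graded sink states `⊤ʲ_μ` onto `⊤` and leaving all other states unchanged;
moreover the two runs have the same value. -/
theorem soundness_of_approximate_automata_runs
    (S : CES) (P : PreProof S) (O : OTF S)
    (ν0 : P.Node) (τ1 : S.TA) (n : ℕ) (hn : 0 < n)
    (m : ℕ) (σ : ℕ → Sig P) (q : ℕ → AState P.Node S.TA)
    (hrun : IsRun (ATransN P O n ν0 τ1) AState.init m σ q) :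
    IsRun (ATrans P O ν0 τ1) AState.init m σ (fun i => collapseTop (q i)) ∧
    runVal (Awt P) m σ (fun i => collapseTop (q i)) = runVal (Awt P) m σ q := by
  have key : ∀ a x b, ATransN P O n ν0 τ1 a x b →
      ATrans P O ν0 τ1 (collapseTop a) x (collapseTop b) ∧
        Awt P (collapseTop a) x (collapseTop b) = Awt P a x b := by
    intro a x b h
    cases h with
    | start => exact ⟨.start, rfl⟩
    | step h1 h2 => exact ⟨.step h1 h2, rfl⟩
    | toBot h1 h2 h3 => exact ⟨.toBot h1 h2 h3, rfl⟩
    | toTopn h => exact ⟨.toTop h, rfl⟩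
    | topnStay h1 h2 h3 => exact ⟨.topLoop _, rfl⟩
    | topnStep h1 h2 => exact ⟨.topLoop _, rfl⟩
  obtain ⟨h0, hs⟩ := hrun
  refine ⟨⟨by simp only [h0, collapseTop], fun i hi => (key _ _ _ (hs i hi)).1⟩, ?_⟩
  unfold runVal
  clear h0
  induction m with
  | zero => rfl
  | succ k ih =>
    simp only [revSum]
    rw [ih fun i hi => hs i (Nat.lt_succ_of_lt hi), (key _ _ _ (hs k (Nat.lt_succ_self k))).2]
end

section
/- Soundness of the Approximate Automata (language level): For ∼ ∈ {<, ≤} and any n > 0: if L_{ℬ^{(P,ν)}_{(τ,τ')}} ∼ L_{𝒜(n)^{(P,ν)}_{(τ,τ')}} then L_{ℬ^{(P,ν)}_{(τ,τ')}} ∼ L_{𝒜(ω)^{(P,ν)}_{(τ,τ')}}. -/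
theorem awt_collapse {S : CES} (P : PreProof S) (q : AState P.Node S.TA) (a : Sig P)
    (q' : AState P.Node S.TA) :
    Awt P (collapseTop q) a (collapseTop q') = Awt P q a q' := by
  cases q <;> cases q' <;> rfl

theorem atrans_collapse {S : CES} (P : PreProof S) (O : OTF S) (n : ℕ) (ν : P.Node) (τ : S.TA)
    {q : AState P.Node S.TA} {a : Sig P} {q' : AState P.Node S.TA}
    (h : ATransN P O n ν τ q a q') :
    ATrans P O ν τ (collapseTop q) a (collapseTop q') := by
  cases h with
  | start => exact .start
  | step h1 h2 => exact .step h1 h2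
  | toBot h1 h2 h3 => exact .toBot h1 h2 h3
  | toTopn h => exact .toTop h
  | topnStay h1 h2 h3 => exact .topLoop _
  | topnStep h1 h2 => exact .topLoop _

theorem run_collapse {S : CES} (P : PreProof S) (O : OTF S) (n : ℕ) (ν : P.Node) (τ : S.TA)
    {m : ℕ} {w : ℕ → Sig P} {q : ℕ → AState P.Node S.TA}
    (h : IsRun (ATransN P O n ν τ) .init m w q) (hF : AFinal (q m)) :
    IsRun (ATrans P O ν τ) .init m w (fun i => collapseTop (q i)) ∧
      AFinal (collapseTop (q m)) ∧
      runVal (Awt P) m w q = runVal (Awt P) m w (fun i => collapseTop (q i)) := by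
  refine ⟨⟨?_, fun i hi => atrans_collapse P O n ν τ (h.2 i hi)⟩, ?_, ?_⟩
  · simp only [h.1]; rfl
  · unfold AFinal at *
    cases hq : q m <;> simp_all [collapseTop]
  · simp only [runVal, awt_collapse]

theorem langAN_le_langA {S : CES} (P : PreProof S) (O : OTF S) (n : ℕ) (ν : P.Node) (τ : S.TA)
    (m : ℕ) (w : ℕ → Sig P) : OptLE (LangAN P O n ν τ m w) (LangA P O ν τ m w) := by
  unfold LangAN LangA Lang
  by_cases hN : ∃ q, IsRun (ATransN P O n ν τ) .init m w q ∧ AFinal (q m)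
  · obtain ⟨q, hq, hF⟩ := hN
    have hN : ∃ q, IsRun (ATransN P O n ν τ) .init m w q ∧ AFinal (q m) := ⟨q, hq, hF⟩
    have hA : ∃ q, IsRun (ATrans P O ν τ) .init m w q ∧ AFinal (q m) :=
      ⟨_, (run_collapse P O n ν τ hq hF).1, (run_collapse P O n ν τ hq hF).2.1⟩
    rw [if_pos hN, if_pos hA]
    refine csSup_le_csSup ?_ ⟨_, q, hq, hF, rfl⟩ ?_
    · have hb : BddAbove (Set.range fun q : ℕ → AState P.Node S.TA => runVal (Awt P) m w q) :=
        Ordinal.bddAbove_of_small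
      refine hb.mono ?_
      rintro v ⟨q, _, _, rfl⟩
      exact ⟨q, rfl⟩
    · rintro v ⟨q, hq, hF, rfl⟩
      obtain ⟨h1, h2, h3⟩ := run_collapse P O n ν τ hq hF
      exact ⟨_, h1, h2, h3⟩
  · rw [if_neg hN]; trivial

theorem optOrd_trans {b : Bool} {x y z : Option Ordl} (h : OptOrd b x y) (h' : OptLE y z) :
    OptOrd b x z := by
  cases b <;> cases x <;> cases y <;> cases z <;> simp_all [OptOrd, OptLE, OptLT]
  · exact h.trans h'
  · exact h.trans_le h'

/-- **Soundness of the Approximate Automata, language level.**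
For `∼ ∈ {<, ≤}` (given by `strict`) and any `n > 0`: if
`L_ℬ ∼ L_{𝒜(n)}` then `L_ℬ ∼ L_{𝒜(ω)}`. -/
theorem soundness_of_approximate_automata_languages
    (S : CES) (P : PreProof S) (O : OTF S)
    (Excl : P.Node → S.TC → Prop)
    (ν : P.Node) (τ : S.TA) (τ' : S.TC)
    (strict : Bool) (n : ℕ) (hn : 0 < n)
    (h : ∀ (m : ℕ) (w : ℕ → Sig P),
      OptOrd strict (LangB P O Excl ν τ' m w) (LangAN P O n ν τ m w)) :
    ∀ (m : ℕ) (w : ℕ → Sig P),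
      OptOrd strict (LangB P O Excl ν τ' m w) (LangA P O ν τ m w) := by
  exact fun m w => optOrd_trans (h m w) (langAN_le_langA P O n ν τ m w)
end
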